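/- arXiv:1601.03179 — 2 statements merged into one kernel-verified Lean document; each statement's English description precedes it below -/
import Mathlib

section
/- Fix γ ∈ (0,1). The restricted intensity density φ_γ is strictly increasing on [0,1/2] and strictly decreasing on [1/2,1]; that is, for all 0 ≤ x₁ < x₂ ≤ 1/2 one has φ_γ(x₁) < φ_γ(x₂), and for all 1/2 ≤ x₁ < x₂ ≤ 1 one has φ_γ(x₁) > φ_γ(x₂). -/
open MeasureTheory Real

/-- The symmetric triangular density on `[0,1]` with support endpoints `y` and `z`. -/
noncomputable def triDens (y z x : ℝ) : ℝ :=
  (2 / |y - z|) * max 0 (1 - (2 / |y - z|) * |x - (y + z) / 2|)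

/-- The region of admissible endpoint pairs for the restricted triangular
distributions: pairs `(y,z) ∈ [0,1]²` with `|y−z| ≥ γ`. -/
def restrictedRegion (γ : ℝ) : Set (ℝ × ℝ) :=
  {p : ℝ × ℝ | p.1 ∈ Set.Icc (0 : ℝ) 1 ∧ p.2 ∈ Set.Icc (0 : ℝ) 1 ∧ γ ≤ |p.1 - p.2|}

/-- The density `φ_γ` of the intensity measure of a random restricted symmetric
triangular distribution with parameter `γ`. -/
noncomputable def phiGamma (γ x : ℝ) : ℝ :=
  ((1 - γ) ^ 2)⁻¹ * ∫ p in restrictedRegion γ, triDens p.1 p.2 x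

lemma aux_meas (γ : ℝ) : MeasurableSet (restrictedRegion γ) := by
  have : IsClosed (restrictedRegion γ) := by
    unfold restrictedRegion
    refine IsClosed.inter (isClosed_Icc.preimage continuous_fst) (IsClosed.inter
      (isClosed_Icc.preimage continuous_snd) ?_)
    exact isClosed_le (f := fun _ : ℝ × ℝ => γ) (g := fun p : ℝ × ℝ => |p.1 - p.2|)
      continuous_const (by fun_prop)
  exact this.measurableSet

lemma aux_int (γ : ℝ) (hγ : 0 < γ) (x : ℝ) :
    IntegrableOn (fun p : ℝ × ℝ => triDens p.1 p.2 x) (restrictedRegion γ) := by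
  refine Measure.integrableOn_of_bounded (M := 2 / γ) ?_ ?_ ?_
  · have : restrictedRegion γ ⊆ Set.Icc (0:ℝ) 1 ×ˢ Set.Icc (0:ℝ) 1 := fun p hp => ⟨hp.1, hp.2.1⟩
    exact ((measure_mono this).trans_lt (isCompact_Icc.prod isCompact_Icc).measure_lt_top).ne
  · apply Measurable.aestronglyMeasurable
    unfold triDens
    fun_prop
  · refine (ae_restrict_iff' (aux_meas γ)).2 (Filter.Eventually.of_forall fun p hp => ?_)
    have h : γ ≤ |p.1 - p.2| := hp.2.2
    have hp : 0 < |p.1 - p.2| := by linarith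
    unfold triDens
    have h1 : 0 ≤ 2 / |p.1 - p.2| := by positivity
    have h2 : 2 / |p.1 - p.2| ≤ 2 / γ := by gcongr
    have h3 : max 0 (1 - (2 / |p.1 - p.2|) * |x - (p.1 + p.2) / 2|) ≤ 1 :=
      max_le zero_le_one (by have := mul_nonneg h1 (abs_nonneg (x - (p.1 + p.2) / 2)); linarith)
    rw [Real.norm_of_nonneg (by positivity)]
    calc _ ≤ 2 / |p.1 - p.2| * 1 := by gcongr
      _ ≤ _ := by linarith

lemma aux_tri_refl (y z x : ℝ) : triDens (1 - y) (1 - z) x = triDens y z (1 - x) := by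
  unfold triDens
  have h1 : |1 - y - (1 - z)| = |y - z| := by rw [← abs_neg]; congr 1; ring
  have h2 : |x - (1 - y + (1 - z)) / 2| = |1 - x - (y + z) / 2| := by
    rw [← abs_neg]; congr 1; ring
  rw [h1, h2]

lemma aux_tri_shift (y z x h : ℝ) : triDens (y + h) (z + h) (x + h) = triDens y z x := by
  unfold triDens
  have h1 : y + h - (z + h) = y - z := by ring
  have h2 : x + h - (y + h + (z + h)) / 2 = x - (y + z) / 2 := by ring
  rw [h1, h2]

lemma aux_reg_refl (γ : ℝ) (p : ℝ × ℝ) :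
    (1, 1) - p ∈ restrictedRegion γ ↔ p ∈ restrictedRegion γ := by
  have h1 : |1 - p.1 - (1 - p.2)| = |p.1 - p.2| := by rw [← abs_neg]; congr 1; ring
  simp only [restrictedRegion, Set.mem_ofPred_eq, Set.mem_Icc, Prod.fst_sub, Prod.snd_sub, h1]
  constructor <;> rintro ⟨⟨a, b⟩, ⟨c, d⟩, e⟩ <;> refine ⟨⟨?_, ?_⟩, ⟨?_, ?_⟩, e⟩ <;> linarith

lemma aux_refl_int (f : ℝ × ℝ → ℝ) (s t : Set (ℝ × ℝ)) (hs : MeasurableSet s)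
    (ht : MeasurableSet t) (hst : ∀ p, (1, 1) - p ∈ s ↔ p ∈ t) :
    ∫ p in s, f p = ∫ p in t, f ((1, 1) - p) := by
  rw [← integral_indicator hs, ← integral_indicator ht,
    ← integral_sub_left_eq_self (s.indicator f) volume ((1 : ℝ), (1 : ℝ))]
  congr 1; ext p
  by_cases h : p ∈ t
  · rw [Set.indicator_of_mem h, Set.indicator_of_mem ((hst p).2 h)]
  · rw [Set.indicator_of_notMem h, Set.indicator_of_notMem (fun h' => h ((hst p).1 h'))]

lemma aux_shift_int (f : ℝ × ℝ → ℝ) (s t : Set (ℝ × ℝ)) (hs : MeasurableSet s)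
    (ht : MeasurableSet t) (v : ℝ × ℝ) (hst : ∀ p, p + v ∈ s ↔ p ∈ t) :
    ∫ p in s, f p = ∫ p in t, f (p + v) := by
  rw [← integral_indicator hs, ← integral_indicator ht,
    ← integral_add_right_eq_self (s.indicator f) v]
  congr 1; ext p
  by_cases h : p ∈ t
  · rw [Set.indicator_of_mem h, Set.indicator_of_mem ((hst p).2 h)]
  · rw [Set.indicator_of_notMem h, Set.indicator_of_notMem (fun h' => h ((hst p).1 h'))]

lemma aux_phi_refl (γ x : ℝ) : phiGamma γ (1 - x) = phiGamma γ x := by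
  unfold phiGamma
  congr 1
  rw [aux_refl_int _ _ _ (aux_meas γ) (aux_meas γ) (aux_reg_refl γ)]
  congr 1; ext p
  simp only [Prod.fst_sub, Prod.snd_sub]
  rw [aux_tri_refl]; congr 1; ring

lemma aux_main (γ : ℝ) (hγ : γ ∈ Set.Ioo (0 : ℝ) 1) (x₁ x₂ : ℝ) (h0 : 0 ≤ x₁) (h12 : x₁ < x₂)
    (h2 : x₂ ≤ 1 / 2) : phiGamma γ x₁ < phiGamma γ x₂ := by
  obtain ⟨hγ0, hγ1⟩ := hγ
  obtain ⟨h, hh⟩ : ∃ h, h = x₂ - x₁ := ⟨_, rfl⟩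
  have hpos : 0 < h := by linarith
  set R := restrictedRegion γ with hR
  have hRm : MeasurableSet R := aux_meas γ
  let U : Set (ℝ × ℝ) := {p | p + (h, h) ∈ R}
  let V : Set (ℝ × ℝ) := {p | p - (h, h) ∈ R}
  have hU : MeasurableSet U := (measurable_id.add_const (h, h)) hRm
  have hV : MeasurableSet V := (measurable_id.sub_const (h, h)) hRm
  have e1 := integral_inter_add_sdiff hU (aux_int γ hγ0 x₁)
  have e2 := integral_inter_add_sdiff hV (aux_int γ hγ0 x₂)
  rw [← hR] at e1 e2
  have e3 : ∫ p in R ∩ V, triDens p.1 p.2 x₂ = ∫ p in R ∩ U, triDens p.1 p.2 x₁ := by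
    rw [aux_shift_int _ (R ∩ V) (R ∩ U) (hRm.inter hV) (hRm.inter hU) (h, h)]
    · congr 1; ext p
      have : x₂ = x₁ + h := by linarith
      simp only [Prod.fst_add, Prod.snd_add, this]
      exact aux_tri_shift _ _ _ _
    · intro p
      simp only [U, V, Set.mem_inter_iff, Set.mem_ofPred_eq, add_sub_cancel_right]
      tauto
  have e4 : ∫ p in R \ V, triDens p.1 p.2 x₂ = ∫ p in R \ U, triDens p.1 p.2 (1 - x₂) := by
    rw [aux_refl_int _ (R \ V) (R \ U) (hRm.diff hV) (hRm.diff hU)]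
    · congr 1; ext p
      exact aux_tri_refl _ _ _
    · intro p
      have : (1, 1) - p - (h, h) = (1, 1) - (p + (h, h)) := by abel
      simp only [U, V, Set.mem_sdiff, Set.mem_ofPred_eq, this, hR, aux_reg_refl]
  have hA : ∀ p ∈ R \ U, (1 - h) / 2 < (p.1 + p.2) / 2 := by
    rintro p ⟨⟨⟨a, b⟩, ⟨c, d⟩, e⟩, hp⟩
    by_contra hc
    apply hp
    have h1 : p.1 + h - (p.2 + h) = p.1 - p.2 := by ring
    refine ⟨⟨?_, ?_⟩, ⟨?_, ?_⟩, ?_⟩ <;> simp only [Prod.fst_add, Prod.snd_add, h1] <;> linarith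
  have hcl : ∀ p ∈ R \ U, |1 - x₂ - (p.1 + p.2) / 2| < |x₁ - (p.1 + p.2) / 2| := by
    intro p hp
    have := hA p hp
    rw [abs_lt, abs_of_neg (by linarith)]
    constructor <;> linarith
  have hI := fun x => (aux_int γ hγ0 x).mono_set (Set.sdiff_subset (t := U))
  have key : 0 < ∫ p in R \ U, (triDens p.1 p.2 (1 - x₂) - triDens p.1 p.2 x₁) := by
    rw [setIntegral_pos_iff_support_of_nonneg_ae]
    · obtain ⟨ε, hε0, hε1, hε2, hε3⟩ : ∃ ε : ℝ, 0 < ε ∧ 2 * ε < 1 - γ ∧ ε < h ∧ ε < 1 / 2 := by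
        refine ⟨min ((1 - γ) / 4) (h / 2), ?_, ?_, ?_, ?_⟩
        · apply lt_min <;> linarith
        · have := min_le_left ((1 - γ) / 4) (h / 2); linarith
        · have := min_le_right ((1 - γ) / 4) (h / 2); linarith
        · have := min_le_left ((1 - γ) / 4) (h / 2); linarith
      have hb : 0 < volume (Set.Ioo (0:ℝ) ε ×ˢ Set.Ioo (1 - ε) (1:ℝ)) := by
        refine (isOpen_Ioo.prod isOpen_Ioo).measure_pos volume ?_
        exact ⟨(ε / 2, 1 - ε / 2), ⟨by constructor <;> simp only <;> linarith,
          by constructor <;> simp only <;> linarith⟩⟩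
      refine hb.trans_le (measure_mono ?_)
      rintro ⟨y, z⟩ ⟨⟨hy0, hy1⟩, ⟨hz0, hz1⟩⟩
      simp only at hy0 hy1 hz0 hz1
      have habs : |y - z| = z - y := by rw [abs_of_neg (by linarith)]; ring
      have hm : ((y, z) : ℝ × ℝ) ∈ R \ U := by
        refine ⟨⟨⟨?_, ?_⟩, ⟨?_, ?_⟩, ?_⟩, ?_⟩
        any_goals simp only [habs]
        any_goals linarith
        rintro ⟨-, ⟨-, hq⟩, -⟩
        simp only [Prod.snd_add] at hq
        linarith
      refine ⟨?_, hm⟩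
      have hc := hcl _ hm
      simp only at hc
      rw [Function.mem_support]
      apply ne_of_gt
      simp only [triDens, habs]
      have hd : 0 < z - y := by linarith
      have hk : 0 < 2 / (z - y) := by positivity
      have hlt : |1 - x₂ - (y + z) / 2| < (z - y) / 2 := by
        rw [abs_lt]; constructor <;> linarith
      have h3 : 0 < 1 - 2 / (z - y) * |1 - x₂ - (y + z) / 2| := by
        have := mul_lt_mul_of_pos_left hlt hk
        have e : 2 / (z - y) * ((z - y) / 2) = 1 := by field_simp
        linarith
      have h4 := mul_lt_mul_of_pos_left hc hk
      rw [← mul_sub]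
      apply mul_pos hk
      rw [sub_pos, max_eq_right h3.le]
      exact max_lt h3 (by linarith)
    · refine (ae_restrict_iff' (hRm.diff hU)).2 (Filter.Eventually.of_forall fun p hp => ?_)
      have hc := (hcl p hp).le
      simp only [Pi.zero_apply, sub_nonneg, triDens]
      gcongr
    · exact (hI _).sub (hI _)
  rw [integral_sub (hI _) (hI _)] at key
  unfold phiGamma
  rw [← hR]
  apply mul_lt_mul_of_pos_left
  · linarith
  · have : 0 < 1 - γ := by linarith
    positivity

/-- The restricted intensity density `φ_γ` is strictly increasing on `[0, 1/2]`
and strictly decreasing on `[1/2, 1]`. -/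
theorem phiGamma_monotone (γ : ℝ) (hγ : γ ∈ Set.Ioo (0 : ℝ) 1) :
    (∀ x₁ x₂ : ℝ, 0 ≤ x₁ → x₁ < x₂ → x₂ ≤ 1 / 2 → phiGamma γ x₁ < phiGamma γ x₂)
    ∧ (∀ x₁ x₂ : ℝ, 1 / 2 ≤ x₁ → x₁ < x₂ → x₂ ≤ 1 → phiGamma γ x₂ < phiGamma γ x₁) := by
  refine ⟨fun x₁ x₂ h0 h1 h2 => aux_main γ hγ x₁ x₂ h0 h1 h2, fun x₁ x₂ h0 h1 h2 => ?_⟩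
  rw [← aux_phi_refl γ x₁, ← aux_phi_refl γ x₂]
  exact aux_main γ hγ _ _ (by linarith) (by linarith) (by linarith)
end

section
/- Fix γ ∈ (0,1). Then (1−γ)^{−2} · ∫_{{(y,z)∈[0,1]²: |y−z|≥γ}} ( ∫₀¹ (f_{(y,z)}(x))² dx ) d(y,z) = −(8/(3(1−γ)))·(1 + ln(γ)/(1−γ)). That is, the expected initial energy of an agent whose opinion is a random restricted symmetric triangular distribution with parameter γ equals −(8/(3(1−γ)))·(1 + ln(γ)/(1−γ)). -/
open MeasureTheory Real

lemma tri_energy_lt (y z : ℝ) (hy : 0 ≤ y) (hz : z ≤ 1) (h : y < z) :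
    ∫ x in (0 : ℝ)..1, (triDens y z x) ^ 2 = 4 / (3 * |y - z|) := by
  have hd : |y - z| = z - y := by rw [abs_sub_comm, abs_of_pos (by linarith)]
  have hd0 : 0 < z - y := by linarith
  have hc : Continuous fun x => (triDens y z x) ^ 2 := by
    unfold triDens; fun_prop
  have hi : ∀ a b : ℝ, IntervalIntegrable (fun x => (triDens y z x) ^ 2) volume a b :=
    fun a b => hc.intervalIntegrable a b
  rw [← intervalIntegral.integral_add_adjacent_intervals (hi 0 y) (hi y 1),
    ← intervalIntegral.integral_add_adjacent_intervals (hi y ((y+z)/2)) (hi ((y+z)/2) 1),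
    ← intervalIntegral.integral_add_adjacent_intervals (hi ((y+z)/2) z) (hi z 1)]
  have e1 : ∫ x in (0:ℝ)..y, (triDens y z x) ^ 2 = ∫ x in (0:ℝ)..y, (0:ℝ) := by
    apply intervalIntegral.integral_congr
    intro x hx
    rw [Set.uIcc_of_le hy] at hx
    obtain ⟨h1, h2⟩ := hx
    have : 1 - (2 / (z - y)) * |x - (y + z) / 2| ≤ 0 := by
      rw [abs_of_nonpos (by linarith), sub_nonpos, div_mul_eq_mul_div, le_div_iff₀ hd0]
      linarith
    simp only [triDens, hd]
    rw [max_eq_left this]; ring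
  have e4 : ∫ x in z..1, (triDens y z x) ^ 2 = ∫ x in z..1, (0:ℝ) := by
    apply intervalIntegral.integral_congr
    intro x hx
    rw [Set.uIcc_of_le hz] at hx
    obtain ⟨h1, h2⟩ := hx
    have : 1 - (2 / (z - y)) * |x - (y + z) / 2| ≤ 0 := by
      rw [abs_of_nonneg (by linarith), sub_nonpos, div_mul_eq_mul_div, le_div_iff₀ hd0]
      linarith
    simp only [triDens, hd]
    rw [max_eq_left this]; ring
  have e2 : ∫ x in y..(y+z)/2, (triDens y z x) ^ 2
      = ∫ x in y..(y+z)/2, 16 / (z - y) ^ 4 * (x - y) ^ 2 := by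
    apply intervalIntegral.integral_congr
    intro x hx
    rw [Set.uIcc_of_le (by linarith)] at hx
    obtain ⟨h1, h2⟩ := hx
    have : 1 - (2 / (z - y)) * |x - (y + z) / 2| = 2 / (z - y) * (x - y) := by
      rw [abs_of_nonpos (by linarith)]; field_simp; ring
    simp only [triDens, hd]
    rw [this, max_eq_right (mul_nonneg (by positivity) (by linarith))]
    field_simp; ring
  have e3 : ∫ x in (y+z)/2..z, (triDens y z x) ^ 2
      = ∫ x in (y+z)/2..z, 16 / (z - y) ^ 4 * (x - z) ^ 2 := by
    apply intervalIntegral.integral_congr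
    intro x hx
    rw [Set.uIcc_of_le (by linarith)] at hx
    obtain ⟨h1, h2⟩ := hx
    have : 1 - (2 / (z - y)) * |x - (y + z) / 2| = 2 / (z - y) * (z - x) := by
      rw [abs_of_nonneg (by linarith)]; field_simp; ring
    simp only [triDens, hd]
    rw [this, max_eq_right (mul_nonneg (by positivity) (by linarith))]
    field_simp; ring
  rw [e1, e2, e3, e4, hd]
  rw [intervalIntegral.integral_const_mul, intervalIntegral.integral_const_mul,
    intervalIntegral.integral_comp_sub_right (fun x => x ^ 2),
    intervalIntegral.integral_comp_sub_right (fun x => x ^ 2)]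
  simp only [integral_pow, intervalIntegral.integral_zero]
  field_simp
  ring

lemma triDens_swap (y z x : ℝ) : triDens y z x = triDens z y x := by
  unfold triDens; rw [abs_sub_comm, add_comm]

lemma tri_energy (γ : ℝ) (hγ : 0 < γ) (p : ℝ × ℝ) (hp : p ∈ restrictedRegion γ) :
    ∫ x in (0 : ℝ)..1, (triDens p.1 p.2 x) ^ 2 = 4 / (3 * |p.1 - p.2|) := by
  obtain ⟨⟨h1, h2⟩, ⟨h3, h4⟩, h5⟩ := hp
  rcases lt_trichotomy p.1 p.2 with h | h | h
  · exact tri_energy_lt _ _ h1 h4 h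
  · rw [h] at h5; simp at h5; linarith
  · simp only [triDens_swap p.1 p.2]
    rw [abs_sub_comm]
    exact tri_energy_lt _ _ h3 h2 h

def halfRegion (γ : ℝ) : Set (ℝ × ℝ) :=
  {p : ℝ × ℝ | p.1 ∈ Set.Icc (0 : ℝ) (1 - γ) ∧ p.2 ∈ Set.Icc (p.1 + γ) 1}

lemma half_meas (γ : ℝ) : MeasurableSet (halfRegion γ) := by
  apply IsClosed.measurableSet
  have : halfRegion γ = {p | 0 ≤ p.1} ∩ {p | p.1 ≤ 1 - γ} ∩ {p | p.1 + γ ≤ p.2} ∩ {p | p.2 ≤ 1} := by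
    ext p; simp [halfRegion]; tauto
  rw [this]
  refine (((isClosed_le ?_ ?_).inter (isClosed_le ?_ ?_)).inter (isClosed_le ?_ ?_)).inter
    (isClosed_le ?_ ?_) <;> fun_prop

lemma region_eq (γ : ℝ) (hγ : 0 < γ) :
    restrictedRegion γ = halfRegion γ ∪ Prod.swap ⁻¹' halfRegion γ := by
  ext ⟨y, z⟩
  simp only [restrictedRegion, halfRegion, Set.mem_setOf_eq, Set.mem_union, Set.mem_preimage,
    Prod.swap, Set.mem_Icc, le_abs]
  constructor
  · rintro ⟨⟨h1, h2⟩, ⟨h3, h4⟩, h | h⟩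
    · right; refine ⟨⟨?_, ?_⟩, ?_, ?_⟩ <;> linarith
    · left; refine ⟨⟨?_, ?_⟩, ?_, ?_⟩ <;> linarith
  · rintro (⟨⟨h1, h2⟩, h3, h4⟩ | ⟨⟨h1, h2⟩, h3, h4⟩)
    · refine ⟨⟨?_, ?_⟩, ⟨?_, ?_⟩, Or.inr ?_⟩ <;> linarith
    · refine ⟨⟨?_, ?_⟩, ⟨?_, ?_⟩, Or.inl ?_⟩ <;> linarith

lemma half_integrable (γ : ℝ) (hγ : 0 < γ) :
    IntegrableOn (fun p : ℝ × ℝ => 4 / (3 * |p.1 - p.2|)) (halfRegion γ) := by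
  have hsub : halfRegion γ ⊆ Set.Icc (0:ℝ) 1 ×ˢ Set.Icc (0:ℝ) 1 := by
    rintro ⟨y, z⟩ ⟨⟨h1, h2⟩, h3, h4⟩
    simp only at *
    refine ⟨⟨?_, ?_⟩, ?_, ?_⟩ <;> simp only <;> linarith
  have hfin : volume (halfRegion γ) < ⊤ :=
    (measure_mono hsub).trans_lt (isCompact_Icc.prod isCompact_Icc).measure_lt_top
  refine Measure.integrableOn_of_bounded (M := 4 / (3 * γ)) hfin.ne ?_ ?_
  · apply Measurable.aestronglyMeasurable
    fun_prop
  · filter_upwards [ae_restrict_mem (half_meas γ)] with p hp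
    obtain ⟨⟨h1, h2⟩, h3, h4⟩ := hp
    have : γ ≤ |p.1 - p.2| := by rw [le_abs]; right; linarith
    rw [Real.norm_of_nonneg (by positivity)]
    gcongr

lemma half_integral (γ : ℝ) (hγ : γ ∈ Set.Ioo (0 : ℝ) 1) :
    ∫ p in halfRegion γ, (4 / (3 * |p.1 - p.2|)) = 4 / 3 * (-(1 - γ) - Real.log γ) := by
  obtain ⟨h0, h1⟩ := hγ
  rw [← integral_indicator (half_meas γ), Measure.volume_eq_prod,
    integral_prod _ ((integrable_indicator_iff (half_meas γ)).2 (half_integrable γ h0))]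
  have key : ∀ y : ℝ, ∫ z, (halfRegion γ).indicator (fun p : ℝ × ℝ => 4 / (3 * |p.1 - p.2|)) (y, z)
      = (Set.Icc 0 (1 - γ)).indicator (fun y => 4 / 3 * (Real.log (1 - y) - Real.log γ)) y := by
    intro y
    by_cases hy : y ∈ Set.Icc 0 (1 - γ)
    · rw [Set.indicator_of_mem hy]
      have : (fun z => (halfRegion γ).indicator (fun p : ℝ × ℝ => 4 / (3 * |p.1 - p.2|)) (y, z))
          = (Set.Icc (y + γ) 1).indicator (fun z => 4 / (3 * |y - z|)) := by
        ext z
        by_cases hz : z ∈ Set.Icc (y + γ) 1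
        · rw [Set.indicator_of_mem hz, Set.indicator_of_mem]
          exact ⟨hy, hz⟩
        · rw [Set.indicator_of_notMem hz, Set.indicator_of_notMem]
          exact fun h => hz h.2
      rw [this, integral_indicator measurableSet_Icc, integral_Icc_eq_integral_Ioc,
        ← intervalIntegral.integral_of_le (by linarith [hy.2])]
      have e : ∫ z in (y + γ)..1, 4 / (3 * |y - z|) = ∫ z in (y + γ)..1, 4 / 3 * (z - y)⁻¹ := by
        apply intervalIntegral.integral_congr
        intro z hz
        rw [Set.uIcc_of_le (by linarith [hy.2])] at hz
        have : 0 < z - y := by linarith [hz.1]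
        simp only
        rw [abs_sub_comm, abs_of_pos this]
        field_simp
      have h2 : 0 < 1 - y := by linarith [hy.2]
      rw [e, intervalIntegral.integral_const_mul,
        intervalIntegral.integral_comp_sub_right (fun x => x⁻¹), add_sub_cancel_left,
        integral_inv_of_pos h0 h2, Real.log_div h2.ne' h0.ne']
    · rw [Set.indicator_of_notMem hy]
      rw [← integral_zero ℝ ℝ]
      congr 1
      ext z
      rw [Set.indicator_of_notMem]
      exact fun h => hy h.1
  simp only [key]
  rw [integral_indicator measurableSet_Icc, integral_Icc_eq_integral_Ioc,
        ← intervalIntegral.integral_of_le (by linarith), intervalIntegral.integral_const_mul,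
        intervalIntegral.integral_comp_sub_left (fun t => Real.log t - Real.log γ),
        intervalIntegral.integral_sub (by simp) (by simp), integral_log]
  simp
  ring

/-- The expected initial energy of an agent whose opinion is a random restricted
symmetric triangular distribution with parameter `γ` equals
`−(8/(3(1−γ)))·(1 + ln(γ)/(1−γ))`. -/
theorem expected_energy_restricted_triangular (γ : ℝ) (hγ : γ ∈ Set.Ioo (0 : ℝ) 1) :
    ((1 - γ) ^ 2)⁻¹ *
        ∫ p in restrictedRegion γ, (∫ x in (0 : ℝ)..1, (triDens p.1 p.2 x) ^ 2)
      = -(8 / (3 * (1 - γ))) * (1 + Real.log γ / (1 - γ)) := by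
  have hm := half_meas γ
  have hm2 : MeasurableSet (Prod.swap ⁻¹' halfRegion γ) := measurable_swap hm
  have hmR : MeasurableSet (restrictedRegion γ) := by
    rw [region_eq γ hγ.1]; exact hm.union hm2
  have hmp : MeasurePreserving (Prod.swap : ℝ × ℝ → ℝ × ℝ) volume volume :=
    Measure.measurePreserving_swap
  have hemb : MeasurableEmbedding (Prod.swap : ℝ × ℝ → ℝ × ℝ) :=
    MeasurableEquiv.prodComm.measurableEmbedding
  have hfun : (fun p : ℝ × ℝ => 4 / (3 * |p.1 - p.2|))
      = (fun p : ℝ × ℝ => 4 / (3 * |p.1 - p.2|)) ∘ Prod.swap := by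
    ext p; simp [abs_sub_comm]
  have hint2 : IntegrableOn (fun p : ℝ × ℝ => 4 / (3 * |p.1 - p.2|))
      (Prod.swap ⁻¹' halfRegion γ) := by
    rw [hfun, hmp.integrableOn_comp_preimage hemb]
    exact half_integrable γ hγ.1
  have hswap : ∫ p in Prod.swap ⁻¹' halfRegion γ, (4 / (3 * |p.1 - p.2|))
      = ∫ p in halfRegion γ, (4 / (3 * |p.1 - p.2|)) := by
    rw [← hmp.setIntegral_preimage_emb hemb _ (halfRegion γ)]
    simp only [Prod.fst_swap, Prod.snd_swap, abs_sub_comm]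
  have hdisj : Disjoint (halfRegion γ) (Prod.swap ⁻¹' halfRegion γ) := by
    rw [Set.disjoint_left]
    rintro ⟨y, z⟩ ⟨_, h1, _⟩ ⟨_, h2, _⟩
    simp only [Prod.swap] at h1 h2
    linarith [hγ.1]
  rw [setIntegral_congr_fun hmR (fun p hp => tri_energy γ hγ.1 p hp), region_eq γ hγ.1,
    setIntegral_union hdisj hm2 (half_integrable γ hγ.1) hint2, hswap, half_integral γ hγ]
  have : 1 - γ ≠ 0 := by linarith [hγ.2]
  field_simp
  ring
end
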